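/- For every d ∈ ℤ, the map f_d : S^1 → S^1, f_d(z) = z^d, satisfies ∬_{S^1×S^1} |x^d − y^d|^2 / |x − y|^2 dσ(x) dσ(y) = 4π^2·|d|; that is, |f_d|_{W^{1/2,2}}^2 = 4π^2·|d|. -/

import Mathlib

open MeasureTheory
open scoped ENNReal

noncomputable section

/-- Arc-length measure on the unit circle, realized as a measure on ℂ:
the pushforward of Lebesgue measure on `[0, 2π)` under `θ ↦ exp (θ i)`. -/
def circleMeasure : Measure ℂ :=
  Measure.map (fun θ : ℝ => Complex.exp (θ * Complex.I))
    (volume.restrict (Set.Ico 0 (2 * Real.pi)))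

/-- The unit circle `S¹ ⊆ ℂ`. -/
def unitCircle : Set ℂ := Metric.sphere (0 : ℂ) 1

end

/-! Since `|x⁻¹ - y⁻¹| = |x - y|` for `x, y ∈ S¹`, one may take `d = n ≥ 0`. For fixed `y ∈ S¹`
the quotient `(xⁿ - yⁿ) / (x - y) = ∑_{k < n} xᵏ yⁿ⁻¹⁻ᵏ` is a polynomial in `x` with `n`
coefficients of modulus `1`, so by Parseval the integral of its squared modulus over `x` is `2πn`.
Integrating this constant over `y` contributes the other factor `2π`. -/

section NormedDivisionRing

variable {K : Type*} [NormedDivisionRing K] {x y : K}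

lemma norm_inv_sub_inv_of_norm_eq_one (hx : ‖x‖ = 1) (hy : ‖y‖ = 1) :
    ‖x⁻¹ - y⁻¹‖ = ‖x - y‖ := by
  have hx₀ : x ≠ 0 := norm_ne_zero_iff.mp (by simp [hx])
  have hy₀ : y ≠ 0 := norm_ne_zero_iff.mp (by simp [hy])
  rw [← dist_eq_norm, dist_inv_inv₀ hx₀ hy₀, hx, hy, mul_one, div_one, dist_eq_norm]

lemma norm_zpow_sub_zpow_eq_natAbs (hx : ‖x‖ = 1) (hy : ‖y‖ = 1) (d : ℤ) :
    ‖x ^ d - y ^ d‖ = ‖x ^ d.natAbs - y ^ d.natAbs‖ := by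
  obtain ⟨n, rfl | rfl⟩ := d.eq_nat_or_neg
  · simp only [zpow_natCast, Int.natAbs_natCast]
  · simp only [zpow_neg, zpow_natCast, Int.natAbs_neg, Int.natAbs_natCast]
    exact norm_inv_sub_inv_of_norm_eq_one (by simp [hx]) (by simp [hy])

end NormedDivisionRing

lemma norm_pow_sub_pow_div_norm_sub {K : Type*} [NormedField K] {x y : K} (hxy : x ≠ y)
    (n : ℕ) :
    ‖x ^ n - y ^ n‖ / ‖x - y‖ = ‖∑ k ∈ Finset.range n, x ^ k * y ^ (n - 1 - k)‖ := by
  rw [geom₂_sum hxy, norm_div]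

lemma norm_sum_mul_zpow_sq_eq_sum_sum {z : ℂ} (hz : ‖z‖ = 1) {ι : Type*} (s : Finset ι)
    (e : ι → ℤ) (c : ι → ℂ) :
    ((‖∑ i ∈ s, c i * z ^ e i‖ ^ 2 : ℝ) : ℂ) =
      ∑ i ∈ s, ∑ j ∈ s, c i * (starRingEnd ℂ) (c j) * z ^ (e i - e j) := by
  have hz₀ : z ≠ 0 := norm_ne_zero_iff.mp (by simp [hz])
  rw [Complex.ofReal_pow, ← Complex.mul_conj', map_sum, Finset.sum_mul_sum]
  refine Finset.sum_congr rfl fun i _ => Finset.sum_congr rfl fun j _ => ?_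
  rw [map_mul, map_zpow₀, ← Complex.inv_eq_conj hz, inv_zpow', sub_eq_add_neg, zpow_add₀ hz₀]
  ring

lemma circleMeasure_eq_map_circleMap :
    circleMeasure = (volume.restrict (Set.Ioc 0 (2 * Real.pi))).map (circleMap 0 1) := by
  rw [circleMeasure, restrict_Ico_eq_restrict_Ioc]
  congr 1 with θ
  simp only [circleMap_zero, Complex.ofReal_one, one_mul]

lemma circleMeasure_univ : circleMeasure Set.univ = ENNReal.ofReal (2 * Real.pi) := by
  rw [circleMeasure_eq_map_circleMap,
    Measure.map_apply (measurable_circleMap 0 1) MeasurableSet.univ]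
  simp

instance isFiniteMeasure_circleMeasure : IsFiniteMeasure circleMeasure :=
  ⟨circleMeasure_univ ▸ ENNReal.ofReal_lt_top⟩

instance nullSingletonClass_circleMeasure : NullSingletonClass circleMeasure where
  measure_singleton z := by
    rw [circleMeasure_eq_map_circleMap,
      Measure.map_apply (measurable_circleMap 0 1) (measurableSet_singleton z)]
    exact ((Set.countable_singleton z).preimage_circleMap 0 one_ne_zero).measure_zero _

lemma ae_circleMeasure_mem_unitCircle : ∀ᵐ z ∂circleMeasure, z ∈ unitCircle := by
  have h_meas : MeasurableSet unitCircle := Metric.isClosed_sphere.measurableSet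
  rw [circleMeasure_eq_map_circleMap]
  exact (ae_map_iff (measurable_circleMap 0 1).aemeasurable h_meas).mpr
    (.of_forall fun θ => circleMap_mem_sphere 0 zero_le_one θ)

lemma ae_circleMeasure_norm_eq_one : ∀ᵐ z ∂circleMeasure, ‖z‖ = 1 :=
  ae_circleMeasure_mem_unitCircle.mono fun _ => mem_sphere_zero_iff_norm.mp

lemma integrable_circleMeasure_of_continuousOn {E : Type*} [NormedAddCommGroup E] {f : ℂ → E}
    (hf : ContinuousOn f unitCircle) : Integrable f circleMeasure := by
  rw [← Measure.restrict_eq_self_of_ae_mem ae_circleMeasure_mem_unitCircle]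
  exact hf.integrableOn_compact (isCompact_sphere 0 1)

lemma continuousOn_zpow_unitCircle (m : ℤ) : ContinuousOn (fun z : ℂ => z ^ m) unitCircle :=
  (continuousOn_zpow₀ m).mono fun _ hz => Metric.ne_of_mem_sphere hz one_ne_zero

lemma integral_zpow_circleMeasure (m : ℤ) :
    ∫ z, z ^ m ∂circleMeasure = if m = 0 then 2 * (Real.pi : ℂ) else 0 := by
  split_ifs with hm
  · simp [hm, measureReal_def, circleMeasure_univ, Real.pi_pos.le]
  · have h_param : ∫ z, z ^ m ∂circleMeasure =
        ∫ θ in (0 : ℝ)..2 * Real.pi, Complex.exp (m * Complex.I * θ) := by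
      rw [intervalIntegral.integral_of_le Real.two_pi_pos.le, circleMeasure_eq_map_circleMap,
        integral_map (measurable_circleMap 0 1).aemeasurable (by fun_prop)]
      congr 1 with θ
      rw [circleMap_zero, Complex.ofReal_one, one_mul, ← Complex.exp_int_mul, mul_right_comm,
        mul_assoc]
    have h_period : Complex.exp (m * Complex.I * (2 * Real.pi : ℝ)) = 1 :=
      Complex.exp_eq_one_iff.mpr ⟨m, by push_cast; ring⟩
    rw [h_param, integral_exp_mul_complex (by simp [hm]), h_period]
    simp

lemma integral_norm_sum_mul_zpow_sq_circleMeasure {ι : Type*} (s : Finset ι) {e : ι → ℤ}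
    (he : Set.InjOn e s) (c : ι → ℂ) :
    ∫ z, ‖∑ i ∈ s, c i * z ^ e i‖ ^ 2 ∂circleMeasure = 2 * Real.pi * ∑ i ∈ s, ‖c i‖ ^ 2 := by
  classical
  have h_expand : ∀ᵐ z ∂circleMeasure, ((‖∑ i ∈ s, c i * z ^ e i‖ ^ 2 : ℝ) : ℂ) =
      ∑ i ∈ s, ∑ j ∈ s, c i * (starRingEnd ℂ) (c j) * z ^ (e i - e j) :=
    ae_circleMeasure_norm_eq_one.mono fun z hz => norm_sum_mul_zpow_sq_eq_sum_sum hz s e c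
  have h_integrable (i j : ι) :
      Integrable (fun z => c i * (starRingEnd ℂ) (c j) * z ^ (e i - e j)) circleMeasure :=
    (integrable_circleMeasure_of_continuousOn (continuousOn_zpow_unitCircle _)).const_mul _
  have h_orthogonal : ∀ i ∈ s, ∀ j ∈ s,
      ∫ z, c i * (starRingEnd ℂ) (c j) * z ^ (e i - e j) ∂circleMeasure =
        if i = j then 2 * (Real.pi : ℂ) * ‖c i‖ ^ 2 else 0 := by
    intro i hi j hj
    rw [integral_const_mul, integral_zpow_circleMeasure]
    simp only [sub_eq_zero, he.eq_iff hi hj]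
    split_ifs with hij
    · rw [hij, Complex.mul_conj', mul_comm]
    · rw [mul_zero]
  apply Complex.ofReal_injective
  rw [← integral_complex_ofReal, integral_congr_ae h_expand,
    integral_finsetSum _ fun i _ => integrable_finsetSum _ fun j _ => h_integrable i j]
  push_cast
  rw [Finset.mul_sum]
  refine Finset.sum_congr rfl fun i hi => ?_
  rw [integral_finsetSum _ fun j _ => h_integrable i j,
    Finset.sum_congr rfl (h_orthogonal i hi), Finset.sum_ite_eq, if_pos hi]

lemma lintegral_norm_pow_sub_pow_sq_div_circleMeasure {y : ℂ} (hy : ‖y‖ = 1) (n : ℕ) :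
    ∫⁻ x, ENNReal.ofReal (‖x ^ n - y ^ n‖ ^ 2 / ‖x - y‖ ^ 2) ∂circleMeasure =
      ENNReal.ofReal (2 * Real.pi * n) := by
  -- The point `x = y` is excluded: there the left-hand side is the junk value `0 / 0 = 0`.
  have h_quotient : ∀ᵐ x ∂circleMeasure, ‖x ^ n - y ^ n‖ ^ 2 / ‖x - y‖ ^ 2 =
      ‖∑ k ∈ Finset.range n, y ^ (n - 1 - k) * x ^ (k : ℤ)‖ ^ 2 := by
    filter_upwards [Measure.ae_ne circleMeasure y] with x hxy
    rw [← div_pow, norm_pow_sub_pow_div_norm_sub hxy]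
    simp only [zpow_natCast, mul_comm]
  have h_parseval := integral_norm_sum_mul_zpow_sq_circleMeasure (Finset.range n)
    Nat.cast_injective.injOn fun k => y ^ (n - 1 - k)
  have h_integrable : Integrable
      (fun x : ℂ => ‖∑ k ∈ Finset.range n, y ^ (n - 1 - k) * x ^ (k : ℤ)‖ ^ 2) circleMeasure :=
    integrable_circleMeasure_of_continuousOn <| by
      simp only [zpow_natCast]
      fun_prop
  rw [lintegral_congr_ae (h_quotient.mono fun x hx => congrArg ENNReal.ofReal hx),
    ← ofReal_integral_eq_lintegral_ofReal h_integrable (.of_forall fun x => sq_nonneg _),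
    h_parseval]
  simp [hy]

lemma lintegral_norm_zpow_sub_zpow_sq_div_circleMeasure {y : ℂ} (hy : ‖y‖ = 1) (d : ℤ) :
    ∫⁻ x, ENNReal.ofReal (‖x ^ d - y ^ d‖ ^ 2 / ‖x - y‖ ^ 2) ∂circleMeasure =
      ENNReal.ofReal (2 * Real.pi * |(d : ℝ)|) := by
  have h_natAbs : ∀ᵐ x ∂circleMeasure, ENNReal.ofReal (‖x ^ d - y ^ d‖ ^ 2 / ‖x - y‖ ^ 2) =
      ENNReal.ofReal (‖x ^ d.natAbs - y ^ d.natAbs‖ ^ 2 / ‖x - y‖ ^ 2) := by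
    filter_upwards [ae_circleMeasure_norm_eq_one] with x hx
    rw [norm_zpow_sub_zpow_eq_natAbs hx hy]
  rw [lintegral_congr_ae h_natAbs, lintegral_norm_pow_sub_pow_sq_div_circleMeasure hy,
    Nat.cast_natAbs, Int.cast_abs]

/-- For every `d ∈ ℤ`, the map `z ↦ z^d` on `S¹` satisfies
`∬_{S¹×S¹} |x^d - y^d|² / |x - y|² dσ(x) dσ(y) = 4π² |d|`. -/
theorem energy_of_power_map (d : ℤ) :
    (∫⁻ q : ℂ × ℂ, ENNReal.ofReal (‖q.1 ^ d - q.2 ^ d‖ ^ 2 / ‖q.1 - q.2‖ ^ 2)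
        ∂(circleMeasure.prod circleMeasure)) =
      ENNReal.ofReal (4 * Real.pi ^ 2 * (|d| : ℝ)) := by
  have h_slice : ∀ᵐ y ∂circleMeasure,
      ∫⁻ x, ENNReal.ofReal (‖x ^ d - y ^ d‖ ^ 2 / ‖x - y‖ ^ 2) ∂circleMeasure =
        ENNReal.ofReal (2 * Real.pi * |(d : ℝ)|) :=
    ae_circleMeasure_norm_eq_one.mono fun y hy =>
      lintegral_norm_zpow_sub_zpow_sq_div_circleMeasure hy d
  rw [lintegral_prod_symm _ (by fun_prop), lintegral_congr_ae h_slice, lintegral_const,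
    circleMeasure_univ, ← ENNReal.ofReal_mul (by positivity)]
  ring_nf
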